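/- If x₁ ≥ 2·x₂ or x₂ ≥ 2·x₁, then the Lengyel transfer game L(b;x₁,y₁;x₂,y₂) is diagonally periodic: SG*(x,y) = SG*(x + x₁ + x₂, y − y₁ − y₂) for all (x,y) ∈ ℕ×ℕ with y ≥ y₁ + y₂. -/

import Mathlib

/-- The minimum excludant of a set of naturals: the least natural number not in the set. -/
noncomputable def mex (S : Set ℕ) : ℕ := sInf {n : ℕ | n ∉ S}

/-- `SG` is the Sprague–Grundy function of the Lengyel transfer game `L(b; x₁,y₁; x₂,y₂)`:
from `(x,y)` one may move to `(x, y−b)` (when `y ≥ b`), to `(x−x₁, y+y₁)` (when `x ≥ x₁`),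
or to `(x−x₂, y+y₂)` (when `x ≥ x₂`), and `SG` satisfies the mex recurrence. -/
def IsLengyelSG (b x1 y1 x2 y2 : ℕ) (SG : ℕ → ℕ → ℕ) : Prop :=
  ∀ x y : ℕ, SG x y = mex
    ((if b ≤ y then ({SG x (y - b)} : Set ℕ) else ∅) ∪
     (if x1 ≤ x then ({SG (x - x1) (y + y1)} : Set ℕ) else ∅) ∪
     (if x2 ≤ x then ({SG (x - x2) (y + y2)} : Set ℕ) else ∅))

/-!
Truncate the Sprague–Grundy values to `{0, 1, 2}` and give the value `2` to every point outside the
quadrant; absent options then have no effect on the truncated mex.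

Induction shows that moving up by `b` exchanges the values `0` and `1` and fixes `2`. Hence the
vertical option of a position can be ignored unless both transfers lead to the value `2`, and a
position with a missing transfer never has the value `2`.

By symmetry let `2 * x2 ≤ x1`, and compare `P = (x, y + y1 + y2)` with `Q = (x + x1 + x2, y)` by
induction on `x`. If `x1 ≤ x`, the transfers from `P` and `Q` have equal values by induction. They
are not both `2`: where periodicity is already known, the value `2` occurs only at abscissas whose
residue modulo `x1 + x2` is at least `x1`, and `x - x1` and `x - x2` cannot both be of this kind. If
`x < x1`, then `P` has value `0` or `1`, and both transfers from `Q` lead to positions that can move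
to `P`, so their values avoid that of `P`. At least one of them is not `2`, so it is the other
element of `{0, 1}`, and `Q` has the value of `P`.
-/

section Mex

variable {S : Set ℕ}

theorem mex_notMem (hS : S.Finite) : mex S ∉ S :=
  Nat.sInf_mem hS.exists_notMem

theorem mem_of_lt_mex {n : ℕ} (hn : n < mex S) : n ∈ S :=
  not_not.mp (Nat.notMem_of_lt_sInf hn)

theorem mex_eq_iff (hS : S.Finite) {n : ℕ} : mex S = n ↔ n ∉ S ∧ ∀ m < n, m ∈ S := by
  constructor
  · rintro rfl
    exact ⟨mex_notMem hS, fun _ => mem_of_lt_mex⟩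
  · rintro ⟨hn, hlt⟩
    exact le_antisymm (Nat.sInf_le hn) (not_lt.mp fun h => mex_notMem hS (hlt _ h))

end Mex

/-- The mex of three values truncated to `Fin 3`, itself truncated: since `2` can only affect a mex
that is at least `2`, an option of value `2` counts for nothing and doubles as a missing option. -/
def truncMex (u v w : Fin 3) : Fin 3 :=
  if u ≠ 0 ∧ v ≠ 0 ∧ w ≠ 0 then 0 else if u ≠ 1 ∧ v ≠ 1 ∧ w ≠ 1 then 1 else 2

section TruncMex

variable {u v w t : Fin 3}

theorem fin_three_eq_of_zero_iff_of_one_iff (h0 : u = 0 ↔ v = 0) (h1 : u = 1 ↔ v = 1) : u = v := by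
  decide +revert

theorem truncMex_right_comm (u v w : Fin 3) : truncMex u v w = truncMex u w v := by
  decide +revert

theorem truncMex_eq_zero_iff : truncMex u v w = 0 ↔ ¬(u = 0 ∨ v = 0 ∨ w = 0) := by
  decide +revert

theorem truncMex_eq_one_iff :
    truncMex u v w = 1 ↔ ¬(u = 1 ∨ v = 1 ∨ w = 1) ∧ (u = 0 ∨ v = 0 ∨ w = 0) := by
  decide +revert

theorem truncMex_ne_middle (hv : v ≠ 2) : truncMex u v w ≠ v := by
  decide +revert

theorem truncMex_two_eq (ht : t ≠ 2) (hv : v ≠ t) (hw : w ≠ t) (hvw : v ≠ 2 ∨ w ≠ 2) :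
    truncMex 2 v w = t := by
  decide +revert

/-- In this and the next two lemmas `u` is the value of the position `b` below: it is missing, or it
differs by the exchange of `0` and `1` from the value of the position itself. -/
theorem truncMex_swap (hu : u = 2 ∨ truncMex u v w = Equiv.swap 0 1 u) :
    truncMex (truncMex u v w) (Equiv.swap 0 1 v) (Equiv.swap 0 1 w) =
      Equiv.swap 0 1 (truncMex u v w) := by
  decide +revert

theorem truncMex_eq_truncMex_two (hu : u = 2 ∨ truncMex u v w = Equiv.swap 0 1 u)
    (hvw : v ≠ 2 ∨ w ≠ 2) : truncMex u v w = truncMex 2 v w := by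
  decide +revert

theorem truncMex_two_middle_ne_two (hu : u = 2 ∨ truncMex u 2 w = Equiv.swap 0 1 u) :
    truncMex u 2 w ≠ 2 := by
  decide +revert

end TruncMex

theorem emod_sub_lt_of_le_emod_sub {a c x : ℤ} (hc : 0 < c) (hac : 2 * c ≤ a)
    (h : a ≤ (x - a) % (a + c)) : (x - c) % (a + c) < a := by
  have hlt : (x - a) % (a + c) < a + c := Int.emod_lt_of_pos _ (by omega)
  have hmod := calc
    (x - c) % (a + c) = (x - a - 2 * c) % (a + c) := by
      rw [← Int.sub_emod_right]
      congr 1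
      ring
    _ = ((x - a) % (a + c) - 2 * c) % (a + c) := (Int.emod_sub_emod ..).symm
    _ = (x - a) % (a + c) - 2 * c := Int.emod_eq_of_lt (by omega) (by omega)
  omega

/-- The function `f` is a truncated Sprague–Grundy function `SG*` of `L(b; x₁,y₁; x₂,y₂)`, extended
to `ℤ × ℤ` by the value `2` outside the quadrant, so that the recurrence needs no case distinction
on which moves are legal. -/
structure IsTruncSG (b x1 y1 x2 y2 : ℕ) (f : ℤ → ℤ → Fin 3) : Prop where
  eq_two_of_neg : ∀ {x y : ℤ}, x < 0 ∨ y < 0 → f x y = 2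
  eq_truncMex : ∀ {x y : ℤ}, 0 ≤ x → 0 ≤ y →
    f x y = truncMex (f x (y - b)) (f (x - x1) (y + y1)) (f (x - x2) (y + y2))

/-- The extension to `ℤ × ℤ` of `SG* = min(SG, 2)` by the value `2` (see `IsTruncSG`). -/
def truncSG (SG : ℕ → ℕ → ℕ) (x y : ℤ) : Fin 3 :=
  if 0 ≤ x ∧ 0 ≤ y then ⟨min (SG x.toNat y.toNat) 2, by omega⟩ else 2

section TruncSG

variable {SG : ℕ → ℕ → ℕ}

theorem val_truncSG_natCast (x y : ℕ) : (truncSG SG x y : ℕ) = min (SG x y) 2 := by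
  simp [truncSG]

theorem truncSG_eq_iff {k : Fin 3} (hk : k ≠ 2) {x y : ℤ} :
    truncSG SG x y = k ↔ 0 ≤ x ∧ 0 ≤ y ∧ SG x.toNat y.toNat = k := by
  unfold truncSG
  split_ifs with h
  · rw [Fin.ext_iff]
    simp only [h, true_and]
    omega
  · grind

theorem IsLengyelSG.isTruncSG_truncSG {b x1 y1 x2 y2 : ℕ} (hSG : IsLengyelSG b x1 y1 x2 y2 SG) :
    IsTruncSG b x1 y1 x2 y2 (truncSG SG) where
  eq_two_of_neg h := if_neg (by omega)
  eq_truncMex {x y} hx hy := by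
    lift x to ℕ using hx
    lift y to ℕ using hy
    have hrec := hSG x y
    set S : Set ℕ := _ ∪ _ ∪ _
    have hfin : S.Finite := by
      refine .union (.union ?_ ?_) ?_ <;> split_ifs <;> simp
    have hmem {k : Fin 3} (hk : k ≠ 2) : (k : ℕ) ∈ S ↔ truncSG SG x (y - b) = k ∨
        truncSG SG (x - x1) (y + y1) = k ∨ truncSG SG (x - x2) (y + y2) = k := by
      simp only [S, Set.mem_union, Set.mem_ite_empty_right, Set.mem_singleton_iff,
        truncSG_eq_iff hk, or_assoc, sub_nonneg, Nat.cast_le, Int.toNat_sub, ← Nat.cast_add,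
        Int.toNat_natCast, Nat.cast_nonneg, true_and, eq_comm (a := (k : ℕ))]
    have hmem0 := hmem (k := 0) (by decide)
    have hmem1 := hmem (k := 1) (by decide)
    apply fin_three_eq_of_zero_iff_of_one_iff
    · rw [truncSG_eq_iff (by decide), truncMex_eq_zero_iff, ← hmem0]
      simp [hrec, mex_eq_iff hfin]
    · rw [truncSG_eq_iff (by decide), truncMex_eq_one_iff, ← hmem0, ← hmem1]
      simp [hrec, mex_eq_iff hfin]

end TruncSG

/-- Diagonal periodicity along the column `x`, for a function on `ℤ × ℤ` of which only the values in
the quadrant matter. -/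
def DiagPeriodicAt {α : Type*} (x1 y1 x2 y2 : ℕ) (f : ℤ → ℤ → α) (x : ℤ) : Prop :=
  ∀ y, 0 ≤ y → f x (y + y1 + y2) = f (x + x1 + x2) y

theorem DiagPeriodicAt.symm {α : Type*} {x1 y1 x2 y2 : ℕ} {f : ℤ → ℤ → α} {x : ℤ}
    (h : DiagPeriodicAt x1 y1 x2 y2 f x) : DiagPeriodicAt x2 y2 x1 y1 f x := by
  intro y hy
  rw [add_right_comm y, add_right_comm x]
  exact h y hy

namespace IsTruncSG

variable {b x1 y1 x2 y2 : ℕ} {f : ℤ → ℤ → Fin 3} {x y : ℤ}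

protected theorem symm (h : IsTruncSG b x1 y1 x2 y2 f) : IsTruncSG b x2 y2 x1 y1 f where
  eq_two_of_neg := h.eq_two_of_neg
  eq_truncMex hx hy := by rw [h.eq_truncMex hx hy, truncMex_right_comm]

theorem ne_of_transfer_ne_two (h : IsTruncSG b x1 y1 x2 y2 f) (hx : 0 ≤ x) (hy : 0 ≤ y)
    (hne : f (x - x1) (y + y1) ≠ 2) : f x y ≠ f (x - x1) (y + y1) := by
  rw [h.eq_truncMex hx hy]
  exact truncMex_ne_middle hne

theorem eq_swap_of_le (h : IsTruncSG b x1 y1 x2 y2 f) (hb : 0 < b) (hx1 : 0 < x1)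
    (hx2 : 0 < x2) (hy : b ≤ y) : f x y = Equiv.swap 0 1 (f x (y - b)) := by
  induction x using Int.strongRec (m := 0) generalizing y with
  | lt x hx =>
    rw [h.eq_two_of_neg (.inl hx), h.eq_two_of_neg (.inl hx)]
    decide
  | ge x hx ihx =>
    induction y using Int.strongRec (m := b) with
    | lt y hlt => omega
    | ge y _ ihy =>
      have hbelow : f x (y - b - b) = 2 ∨ f x (y - b) = Equiv.swap 0 1 (f x (y - b - b)) :=
        (lt_or_ge (y - b) b).imp (fun hlt => h.eq_two_of_neg (.inr (by omega)))
          (ihy (y - b) (by omega))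
      have htransfer1 : f (x - x1) (y + y1) = Equiv.swap 0 1 (f (x - x1) (y - b + y1)) := by
        rw [ihx (x - x1) (by omega) (by omega), add_sub_right_comm]
      have htransfer2 : f (x - x2) (y + y2) = Equiv.swap 0 1 (f (x - x2) (y - b + y2)) := by
        rw [ihx (x - x2) (by omega) (by omega), add_sub_right_comm]
      rw [h.eq_truncMex hx (by omega : 0 ≤ y - b)] at hbelow
      rw [h.eq_truncMex hx (by omega : 0 ≤ y), htransfer1, htransfer2,
        h.eq_truncMex hx (by omega : 0 ≤ y - b)]
      exact truncMex_swap hbelow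

theorem below_eq_two_or_eq_swap (h : IsTruncSG b x1 y1 x2 y2 f) (hb : 0 < b) (hx1 : 0 < x1)
    (hx2 : 0 < x2) :
    f x (y - b) = 2 ∨ f x y = Equiv.swap 0 1 (f x (y - b)) :=
  (lt_or_ge y b).imp (fun hlt => h.eq_two_of_neg (.inr (by omega)))
    (h.eq_swap_of_le hb hx1 hx2)

theorem eq_truncMex_two (h : IsTruncSG b x1 y1 x2 y2 f) (hb : 0 < b) (hx1 : 0 < x1)
    (hx2 : 0 < x2) (hx : 0 ≤ x) (hy : 0 ≤ y)
    (hne : f (x - x1) (y + y1) ≠ 2 ∨ f (x - x2) (y + y2) ≠ 2) :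
    f x y = truncMex 2 (f (x - x1) (y + y1)) (f (x - x2) (y + y2)) := by
  have hbelow := h.below_eq_two_or_eq_swap hb hx1 hx2 (x := x) (y := y)
  rw [h.eq_truncMex hx hy] at hbelow ⊢
  exact truncMex_eq_truncMex_two hbelow hne

theorem ne_two_of_lt (h : IsTruncSG b x1 y1 x2 y2 f) (hb : 0 < b) (hx1 : 0 < x1)
    (hx2 : 0 < x2) (hx : 0 ≤ x) (hxlt : x < x1) (hy : 0 ≤ y) : f x y ≠ 2 := by
  have hbelow := h.below_eq_two_or_eq_swap hb hx1 hx2 (x := x) (y := y)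
  rw [h.eq_truncMex hx hy, h.eq_two_of_neg (.inl (by omega : x - x1 < 0))] at hbelow ⊢
  exact truncMex_two_middle_ne_two hbelow

theorem le_emod_of_eq_two (h : IsTruncSG b x1 y1 x2 y2 f) (hb : 0 < b) (hx1 : 0 < x1)
    (hx2 : 0 < x2) (hx : 0 ≤ x) (hy : 0 ≤ y)
    (hper : ∀ z, 0 ≤ z → z < x → DiagPeriodicAt x1 y1 x2 y2 f z) (h2 : f x y = 2) :
    x1 ≤ x % (x1 + x2) := by
  induction x using Int.strongRec (m := 0) generalizing y with
  | lt x hneg => omega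
  | ge x _ ih =>
    rcases lt_or_ge x (x1 + x2) with hlt | hge
    · rw [Int.emod_eq_of_lt hx hlt]
      by_contra! hxlt
      exact h.ne_two_of_lt hb hx1 hx2 hx hxlt hy h2
    · have hshift : f (x - (x1 + x2)) (y + y1 + y2) = 2 := by
        rw [hper _ (by omega) (by omega) y hy, ← h2]
        congr 1
        ring
      rw [← Int.sub_emod_right]
      exact ih _ (by omega) (by omega) (by omega) (fun z hz hlt => hper z hz (by omega)) hshift

theorem diagPeriodicAt_of_le (h : IsTruncSG b x1 y1 x2 y2 f) (hb : 0 < b) (hx1 : 0 < x1)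
    (hx2 : 0 < x2) (hratio : 2 * x2 ≤ x1) (hx : x1 ≤ x)
    (ih : ∀ z, 0 ≤ z → z < x → DiagPeriodicAt x1 y1 x2 y2 f z) :
    DiagPeriodicAt x1 y1 x2 y2 f x := by
  intro y hy
  have htransfer1 : f (x + x1 + x2 - x1) (y + y1) = f (x - x1) (y + y1 + y2 + y1) := by
    have hper := ih (x - x1) (by omega) (by omega) (y + y1) (by omega)
    grind
  have htransfer2 : f (x + x1 + x2 - x2) (y + y2) = f (x - x2) (y + y1 + y2 + y2) := by
    have hper := ih (x - x2) (by omega) (by omega) (y + y2) (by omega)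
    grind
  have hne : f (x - x1) (y + y1 + y2 + y1) ≠ 2 ∨ f (x - x2) (y + y1 + y2 + y2) ≠ 2 := by
    by_contra! ⟨h1, h2⟩
    have hmod1 := h.le_emod_of_eq_two hb hx1 hx2 (by omega) (by omega)
      (fun z hz hlt => ih z hz (by omega)) h1
    have hmod2 := h.le_emod_of_eq_two hb hx1 hx2 (by omega) (by omega)
      (fun z hz hlt => ih z hz (by omega)) h2
    exact (emod_sub_lt_of_le_emod_sub (by omega) (by omega) hmod1).not_ge hmod2
  rw [h.eq_truncMex_two hb hx1 hx2 (by omega) (by omega) hne, ← htransfer1, ← htransfer2,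
    ← h.eq_truncMex_two hb hx1 hx2 (by omega) hy (by rwa [htransfer1, htransfer2])]

theorem diagPeriodicAt_of_lt (h : IsTruncSG b x1 y1 x2 y2 f) (hb : 0 < b) (hx1 : 0 < x1)
    (hx2 : 0 < x2) (hratio : 2 * x2 ≤ x1) (hx : 0 ≤ x) (hxlt : x < x1)
    (ih : ∀ z, 0 ≤ z → z < x → DiagPeriodicAt x1 y1 x2 y2 f z) :
    DiagPeriodicAt x1 y1 x2 y2 f x := by
  intro y hy
  have hP : f x (y + y1 + y2) ≠ 2 := h.ne_two_of_lt hb hx1 hx2 hx hxlt (by omega)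
  have hne1 : f (x + x1 + x2 - x1) (y + y1) ≠ f x (y + y1 + y2) := by
    have hmove := h.symm.ne_of_transfer_ne_two (x := x + x2) (y := y + y1) (by omega) (by omega)
    grind
  have hne2 : f (x + x1 + x2 - x2) (y + y2) ≠ f x (y + y1 + y2) := by
    have hmove := h.ne_of_transfer_ne_two (x := x + x1) (y := y + y2) (by omega) (by omega)
    grind
  have hor : f (x + x1 + x2 - x1) (y + y1) ≠ 2 ∨ f (x + x1 + x2 - x2) (y + y2) ≠ 2 := by
    rcases lt_or_ge x x2 with hlt | hge
    · exact .inl (h.ne_two_of_lt hb hx1 hx2 (by omega) (by omega) (by omega))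
    · right
      have hper := ih (x - x2) (by omega) (by omega) (y + y2) (by omega)
      have hne := h.ne_two_of_lt hb hx1 hx2 (x := x - x2) (y := y + y2 + y1 + y2)
        (by omega) (by omega) (by omega)
      grind
  rw [h.eq_truncMex_two hb hx1 hx2 (x := x + x1 + x2) (by omega) hy hor]
  exact (truncMex_two_eq hP hne1 hne2 hor).symm

theorem diagPeriodicAt (h : IsTruncSG b x1 y1 x2 y2 f) (hb : 0 < b) (hx1 : 0 < x1)
    (hx2 : 0 < x2) (hratio : 2 * x2 ≤ x1) (hx : 0 ≤ x) :
    DiagPeriodicAt x1 y1 x2 y2 f x := by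
  induction x using Int.strongRec (m := 0) with
  | lt x hneg => omega
  | ge x _ ih =>
    have ih' : ∀ z, 0 ≤ z → z < x → DiagPeriodicAt x1 y1 x2 y2 f z := fun z hz hlt => ih z hlt hz
    rcases lt_or_ge x x1 with hlt | hge
    · exact h.diagPeriodicAt_of_lt hb hx1 hx2 hratio hx hlt ih'
    · exact h.diagPeriodicAt_of_le hb hx1 hx2 hratio hge ih'

end IsTruncSG

/-- If `x₁ ≥ 2x₂` or `x₂ ≥ 2x₁`, then `L(b;x₁,y₁;x₂,y₂)` is diagonally periodic:
`SG*(x,y) = SG*(x+x₁+x₂, y−y₁−y₂)` whenever `y ≥ y₁+y₂`, where `SG* = min(SG, 2)`. -/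
theorem diagonal_periodicity_of_ratio (b x1 x2 y1 y2 : ℕ)
    (hb : 0 < b) (hx1 : 0 < x1) (hx2 : 0 < x2)
    (hratio : 2 * x2 ≤ x1 ∨ 2 * x1 ≤ x2)
    (SG : ℕ → ℕ → ℕ) (hSG : IsLengyelSG b x1 y1 x2 y2 SG) :
    ∀ x y : ℕ, y1 + y2 ≤ y →
      min (SG x y) 2 = min (SG (x + x1 + x2) (y - (y1 + y2))) 2 := by
  intro x y hy
  have hf := hSG.isTruncSG_truncSG
  have hper : DiagPeriodicAt x1 y1 x2 y2 (truncSG SG) x := by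
    rcases hratio with h | h
    · exact hf.diagPeriodicAt hb hx1 hx2 h (by omega)
    · exact (hf.symm.diagPeriodicAt hb hx2 hx1 h (by omega)).symm
  obtain ⟨w, rfl⟩ := Nat.exists_eq_add_of_le' hy
  rw [Nat.add_sub_cancel, ← add_assoc, ← val_truncSG_natCast, ← val_truncSG_natCast]
  exact_mod_cast congrArg Fin.val (hper w (by omega))
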